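/- arXiv:1611.05563 — 2 statements merged into one kernel-verified Lean document; each statement's English description precedes it below -/
import Mathlib

section
/- Let n be a natural number and let q > 0 and p be real with p > n + 1. Then the function y ↦ y^{−(n+2)} (y^p S_p(y)/Γ(p) − 1) is Lebesgue-integrable on (0, ∞), and (Γ(p)/Γ(p−n−1)) · ∫_0^∞ y^{−(n+2)} (y^p S_p(y)/Γ(p) − 1) dy = − B_{n+1}(q)/(n+1), where B_{n+1} is the (n+1)-st Bernoulli polynomial in the convention B_1(x) = x − 1/2. In particular this n-th moment of the cusp density is independent of p. -/
open MeasureTheory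

open Set Filter Topology


/-- iterated `x`-derivative of `x^(p-1) e^{-xy}` -/
noncomputable def cuspG (y : ℝ) : ℕ → ℝ → ℝ → ℝ
  | 0, p, x => x ^ (p - 1) * Real.exp (-(x * y))
  | k + 1, p, x => (p - 1) * cuspG y k (p - 1) x - y * cuspG y k p x

/-- iterated derivative of `x^s` -/
noncomputable def cuspP : ℕ → ℝ → ℝ → ℝ
  | 0, s, x => x ^ s
  | k + 1, s, x => s * cuspP k (s - 1) x

/-- upper bound for `|cuspG|` on `[x, x+1]` -/
noncomputable def cuspE (q y : ℝ) : ℕ → ℝ → ℝ → ℝ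
  | 0, p, x => max 1 ((1 + 1 / q) ^ (p - 1)) * (x ^ (p - 1) * Real.exp (-(x * y)))
  | k + 1, p, x => |p - 1| * cuspE q y k (p - 1) x + y * cuspE q y k p x

/-- moment constants of `cuspE` -/
noncomputable def cuspC (q : ℝ) : ℕ → ℝ → ℝ → ℝ
  | 0, p, a => max 1 ((1 + 1 / q) ^ (p - 1)) * Real.Gamma a
  | k + 1, p, a => |p - 1| * cuspC q k (p - 1) a + cuspC q k p (a + 1)

lemma cuspG_deriv (y : ℝ) (k : ℕ) : ∀ (p x : ℝ), 0 < x →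
    HasDerivAt (cuspG y k p) (cuspG y (k + 1) p x) x := by
  induction k with
  | zero =>
    intro p x hx
    have h1 := (Real.hasDerivAt_rpow_const (x := x) (p := p - 1) (Or.inl hx.ne'))
    have h2 : HasDerivAt (fun x => Real.exp (-(x * y))) (Real.exp (-(x*y)) * (-(1 * y))) x :=
      (((hasDerivAt_id x).mul_const y).neg).exp
    refine (h1.mul h2).congr_deriv ?_
    simp only [cuspG]
    ring
  | succ k ih =>
    intro p x hx
    exact ((ih (p - 1) x hx).const_mul (p - 1)).sub ((ih p x hx).const_mul y)

lemma cuspP_deriv (k : ℕ) : ∀ (s x : ℝ), 0 < x →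
    HasDerivAt (cuspP k s) (cuspP (k + 1) s x) x := by
  induction k with
  | zero =>
    intro s x hx
    exact (Real.hasDerivAt_rpow_const (x := x) (p := s) (Or.inl hx.ne'))
  | succ k ih =>
    intro s x hx
    exact ((ih (s - 1) x hx).const_mul s)

lemma cuspP_zero (n k : ℕ) (h : n < k) (x : ℝ) : cuspP k n x = 0 := by
  induction n generalizing k with
  | zero =>
    obtain ⟨k, rfl⟩ := Nat.exists_eq_succ_of_ne_zero h.ne'
    simp [cuspP]
  | succ n ih =>
    obtain ⟨k, rfl⟩ := Nat.exists_eq_succ_of_ne_zero (by omega : k ≠ 0)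
    simp [cuspP, ih k (by omega)]

lemma cuspP_formula (n k : ℕ) (h : k ≤ n) (x : ℝ) :
    cuspP k n x = (n.descFactorial k : ℝ) * x ^ (n - k) := by
  induction k generalizing n with
  | zero => simp [cuspP]
  | succ k ih =>
    obtain ⟨n, rfl⟩ := Nat.exists_eq_succ_of_ne_zero (by omega : n ≠ 0)
    have := ih n (by omega)
    rw [Nat.succ_eq_add_one, Nat.succ_descFactorial_succ, Nat.add_sub_add_right]
    simp only [cuspP]
    push_cast
    rw [add_sub_cancel_right, this]
    ring

lemma gamma_moment (a r : ℝ) (ha : 0 < a) (hr : 0 < r) :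
    IntegrableOn (fun y => y ^ (a - 1) * Real.exp (-(r * y))) (Ioi 0) ∧
    ∫ y in Ioi (0 : ℝ), y ^ (a - 1) * Real.exp (-(r * y)) = Real.Gamma a * r ^ (-a) := by
  constructor
  · have := integrableOn_rpow_mul_exp_neg_mul_rpow (s := a - 1) (p := 1) (b := r)
      (by linarith) one_pos hr
    simpa using this
  · rw [Real.integral_rpow_mul_exp_neg_mul_Ioi ha hr, one_div, Real.inv_rpow hr.le,
      Real.rpow_neg hr.le, mul_comm]

lemma cuspG_moment (x : ℝ) (hx : 0 < x) (k : ℕ) : ∀ (p a : ℝ), 0 < a →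
    IntegrableOn (fun y => y ^ (a - 1) * cuspG y k p x) (Ioi 0) ∧
    ∫ y in Ioi (0 : ℝ), y ^ (a - 1) * cuspG y k p x = Real.Gamma a * cuspP k (p - 1 - a) x := by
  induction k with
  | zero =>
    intro p a ha
    have h := gamma_moment a x ha hx
    have e : (fun y => y ^ (a - 1) * cuspG y 0 p x) =
      fun y => x ^ (p - 1) * (y ^ (a - 1) * Real.exp (-(x * y))) := by
      ext y; simp only [cuspG]; ring
    rw [e]
    refine ⟨h.1.const_mul _, ?_⟩
    rw [integral_const_mul, h.2, cuspP, sub_eq_add_neg (p - 1) a, Real.rpow_add hx]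
    ring
  | succ k ih =>
    intro p a ha
    have h1 := ih (p - 1) a ha
    have h2 := ih p (a + 1) (by linarith)
    have e : EqOn (fun y => (p - 1) * (y ^ (a - 1) * cuspG y k (p - 1) x)
        - y ^ (a + 1 - 1) * cuspG y k p x) (fun y => y ^ (a - 1) * cuspG y (k + 1) p x) (Ioi 0) := by
      intro y hy
      have hy : 0 < y := hy
      simp only [cuspG]
      rw [show a + 1 - 1 = (a - 1) + 1 by ring, Real.rpow_add_one hy.ne']
      ring
    constructor
    · exact IntegrableOn.congr_fun ((h1.1.const_mul (p - 1)).sub h2.1) e measurableSet_Ioi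
    · rw [← setIntegral_congr_fun measurableSet_Ioi e, integral_sub (h1.1.const_mul (p - 1)) h2.1,
        integral_const_mul, h1.2, h2.2, Real.Gamma_add_one ha.ne', cuspP]
      rw [show p - 1 - 1 - a = p - 1 - a - 1 by ring, show p - 1 - (a + 1) = p - 1 - a - 1 by ring]
      ring

lemma cuspE_nonneg (q y x : ℝ) (hy : 0 < y) (hx : 0 < x) (k : ℕ) : ∀ p, 0 ≤ cuspE q y k p x := by
  induction k with
  | zero => intro p; simp only [cuspE]; positivity
  | succ k ih =>
    intro p
    have := ih p
    have := ih (p - 1)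
    simp only [cuspE]; positivity

lemma cuspE_moment (q x : ℝ) (hx : 0 < x) (k : ℕ) : ∀ (p a : ℝ), 0 < a →
    IntegrableOn (fun y => y ^ (a - 1) * cuspE q y k p x) (Ioi 0) ∧
    ∫ y in Ioi (0 : ℝ), y ^ (a - 1) * cuspE q y k p x = cuspC q k p a * x ^ (p - 1 - a - k) := by
  induction k with
  | zero =>
    intro p a ha
    have h := gamma_moment a x ha hx
    have e : (fun y => y ^ (a - 1) * cuspE q y 0 p x) =
      fun y => (max 1 ((1 + 1 / q) ^ (p - 1)) * x ^ (p - 1)) * (y ^ (a - 1) * Real.exp (-(x * y))) := by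
      ext y; simp only [cuspE]; ring
    rw [e]
    refine ⟨h.1.const_mul _, ?_⟩
    rw [integral_const_mul, h.2, cuspC, Nat.cast_zero, sub_zero, sub_eq_add_neg (p - 1) a,
      Real.rpow_add hx]
    ring
  | succ k ih =>
    intro p a ha
    have h1 := ih (p - 1) a ha
    have h2 := ih p (a + 1) (by linarith)
    have e : EqOn (fun y => |p - 1| * (y ^ (a - 1) * cuspE q y k (p - 1) x)
        + y ^ (a + 1 - 1) * cuspE q y k p x) (fun y => y ^ (a - 1) * cuspE q y (k + 1) p x)
        (Ioi 0) := by
      intro y hy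
      have hy : 0 < y := hy
      simp only [cuspE]
      rw [show a + 1 - 1 = (a - 1) + 1 by ring, Real.rpow_add_one hy.ne']
      ring
    constructor
    · exact IntegrableOn.congr_fun ((h1.1.const_mul _).add h2.1) e measurableSet_Ioi
    · rw [← setIntegral_congr_fun measurableSet_Ioi e, integral_add (h1.1.const_mul _) h2.1,
        integral_const_mul, h1.2, h2.2, cuspC]
      push_cast
      rw [show p - 1 - 1 - a - k = p - 1 - a - (k + 1) by ring,
        show p - 1 - (a + 1) - k = p - 1 - a - (k + 1) by ring]
      ring

lemma cuspG_le (q y x t : ℝ) (hq : 0 < q) (hy : 0 < y) (hx : q ≤ x) (h1 : x ≤ t) (h2 : t ≤ x + 1)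
    (k : ℕ) : ∀ p, |cuspG y k p t| ≤ cuspE q y k p x := by
  have hx0 : 0 < x := hq.trans_le hx
  have ht0 : 0 < t := hx0.trans_le h1
  induction k with
  | zero =>
    intro p
    simp only [cuspG, cuspE]
    rw [abs_of_nonneg (by positivity), ← mul_assoc]
    have hexp : Real.exp (-(t * y)) ≤ Real.exp (-(x * y)) := by
      apply Real.exp_le_exp.2; nlinarith
    have hpow : t ^ (p - 1) ≤ max 1 ((1 + 1 / q) ^ (p - 1)) * x ^ (p - 1) := by
      have hr1 : 1 ≤ t / x := by rw [le_div_iff₀ hx0]; linarith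
      have hr2 : t / x ≤ 1 + 1 / q := by
        rw [div_le_iff₀ hx0]
        have : 1 ≤ 1 / q * x := by rw [one_div, inv_mul_eq_div, le_div_iff₀ hq]; linarith
        linarith
      have : t = t / x * x := by field_simp
      rw [this, Real.mul_rpow (by positivity) hx0.le]
      refine mul_le_mul_of_nonneg_right ?_ (by positivity)
      rcases le_total 0 (p - 1) with h | h
      · exact le_max_of_le_right (Real.rpow_le_rpow (by positivity) hr2 h)
      · exact le_max_of_le_left (Real.rpow_le_one_of_one_le_of_nonpos hr1 h)
    exact mul_le_mul hpow hexp (by positivity) (by positivity)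
  | succ k ih =>
    intro p
    simp only [cuspG, cuspE]
    refine (abs_sub _ _).trans ?_
    rw [abs_mul, abs_mul, abs_of_pos hy]
    gcongr
    · exact ih _
    · exact ih _

lemma summable_base (q y s : ℝ) (hq : 0 < q) (hy : 0 < y) :
    Summable (fun m : ℕ => ((m : ℝ) + q) ^ s * Real.exp (-(((m : ℝ) + q) * y))) := by
  have h := tendsto_rpow_mul_exp_neg_mul_atTop_nhds_zero (s + 2) y hy
  have hc : Tendsto (fun m : ℕ => (m : ℝ) + q) atTop atTop :=
    tendsto_atTop_add_const_right _ _ tendsto_natCast_atTop_atTop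
  have h' := h.comp hc
  have hs : Summable (fun m : ℕ => 1 / |(m : ℝ) + q| ^ (2 : ℝ)) :=
    (Real.summable_one_div_nat_add_rpow q 2).2 (by norm_num)
  refine summable_of_isBigO_nat hs ?_
  refine Asymptotics.IsBigO.of_bound 1 ?_
  filter_upwards [h'.eventually (gt_mem_nhds zero_lt_one)] with m hm
  have hm0 : (0 : ℝ) < m + q := by positivity
  simp only [Function.comp] at hm
  rw [Real.norm_of_nonneg (by positivity), Real.norm_of_nonneg (by positivity), one_mul,
    abs_of_pos hm0, le_div_iff₀ (by positivity)]
  rw [Real.rpow_add hm0] at hm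
  rw [show -(((m : ℝ) + q) * y) = -y * (m + q) by ring]
  nlinarith

lemma summable_cuspE (q y : ℝ) (hq : 0 < q) (hy : 0 < y) (k : ℕ) : ∀ p,
    Summable (fun m : ℕ => cuspE q y k p ((m : ℝ) + q)) := by
  induction k with
  | zero => intro p; exact (summable_base q y (p - 1) hq hy).mul_left _
  | succ k ih => intro p; exact ((ih (p - 1)).mul_left _).add ((ih p).mul_left _)

lemma integrable_hasSum {μ : Measure ℝ} (F : ℕ → ℝ → ℝ) (H : ℝ → ℝ) (hF : ∀ i, Integrable (F i) μ)
    (hs : Summable fun i => ∫ a, ‖F i a‖ ∂μ) (hH : ∀ᵐ y ∂μ, HasSum (fun i => F i y) (H y)) :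
    Integrable H μ ∧ HasSum (fun i => ∫ a, F i a ∂μ) (∫ a, H a ∂μ) := by
  refine ⟨⟨?_, ?_⟩, ?_⟩
  · refine aestronglyMeasurable_of_tendsto_ae (u := atTop)
      (f := fun (n : ℕ) y => ∑ i ∈ Finset.range n, F i y) ?_ ?_
    · intro n
      exact Finset.aestronglyMeasurable_fun_sum _ fun i _ => (hF i).1
    · filter_upwards [hH] with y hy using hy.tendsto_sum_nat
  · have h1 : ∫⁻ y, ‖H y‖ₑ ∂μ ≤ ∑' i, ∫⁻ y, ‖F i y‖ₑ ∂μ := by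
      rw [← lintegral_tsum fun i => (hF i).1.enorm]
      refine lintegral_mono_ae ?_
      filter_upwards [hH] with y hy
      rw [← hy.tsum_eq]
      exact enorm_tsum_le_tsum_enorm
    refine lt_of_le_of_lt h1 ?_
    have h2 : ∀ i, ∫⁻ y, ‖F i y‖ₑ ∂μ = ENNReal.ofReal (∫ a, ‖F i a‖ ∂μ) := fun i =>
      (ofReal_integral_norm_eq_lintegral_enorm (hF i)).symm
    simp_rw [h2]
    rw [← ENNReal.ofReal_tsum_of_nonneg (fun i => integral_nonneg fun _ => norm_nonneg _) hs]
    exact ENNReal.ofReal_lt_top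
  · have := hasSum_integral_of_summable_integral_norm hF hs
    have e : ∫ a, H a ∂μ = ∫ a, ∑' i, F i a ∂μ := by
      refine integral_congr_ae ?_
      filter_upwards [hH] with y hy using hy.tsum_eq.symm
    rwa [e]

/-- Euler-Maclaurin on one unit interval. -/
lemma euler_maclaurin_unit (F : ℕ → ℝ → ℝ) (x : ℝ)
    (hF : ∀ k, ∀ t ∈ Icc x (x + 1), HasDerivAt (F k) (F (k + 1) t) t) (N : ℕ) :
    F 0 x - (∫ t in x..(x + 1), F 0 t)
      - ∑ k ∈ Finset.range (N + 1), (bernoulli (k + 1) : ℝ) / ((k + 1).factorial : ℝ) *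
          (F k (x + 1) - F k x)
      = (-1) ^ N * ∫ t in x..(x + 1), bernoulliFun (N + 1) (t - x) / ((N + 1).factorial : ℝ) *
          F (N + 1) t := by
  have huI : uIcc x (x + 1) = Icc x (x + 1) := uIcc_of_le (by linarith)
  have hcont : ∀ k, ContinuousOn (F k) (uIcc x (x + 1)) := fun k t ht =>
    (hF k t (huI ▸ ht)).continuousAt.continuousWithinAt
  have hbc : ∀ k, Continuous (bernoulliFun k) := fun k =>
    continuous_iff_continuousAt.2 fun t => (hasDerivAt_bernoulliFun k t).continuousAt
  have parts : ∀ k, (∫ t in x..(x + 1), bernoulliFun (k + 1) (t - x) / ((k + 1).factorial : ℝ) *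
          F (k + 1) t) = bernoulliFun (k + 1) 1 / ((k + 1).factorial : ℝ) * F k (x + 1)
            - bernoulliFun (k + 1) 0 / ((k + 1).factorial : ℝ) * F k x
            - ∫ t in x..(x + 1), bernoulliFun k (t - x) / (k.factorial : ℝ) * F k t := by
    intro k
    have := intervalIntegral.integral_mul_deriv_eq_deriv_mul (a := x) (b := x + 1)
      (u := fun t => bernoulliFun (k + 1) (t - x) / ((k + 1).factorial : ℝ))
      (u' := fun t => bernoulliFun k (t - x) / (k.factorial : ℝ)) (v := F k) (v' := F (k + 1))
      (fun t _ => by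
        have h := ((hasDerivAt_bernoulliFun (k + 1) (t - x)).comp_sub_const t x).div_const
          ((k + 1).factorial : ℝ)
        refine h.congr_deriv ?_
        simp only [Nat.add_sub_cancel, Nat.factorial_succ]
        push_cast
        field_simp)
      (fun t ht => hF k t (huI ▸ ht))
      ((((hbc k).comp (continuous_id.sub continuous_const)).div_const _).intervalIntegrable _ _)
      ((hcont (k + 1)).intervalIntegrable)
    simpa using this
  induction N with
  | zero =>
    have h := parts 0
    simp only [zero_add, bernoulliFun_zero, Nat.factorial_zero, Nat.factorial_one, Nat.cast_one,
      div_one, one_mul, pow_zero, bernoulliFun_one] at h ⊢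
    rw [h]
    simp
    ring
  | succ N ih =>
    rw [Finset.sum_range_succ, ← sub_sub, ih, parts (N + 1), bernoulliFun_endpoints_eq_of_ne_one
      (by omega), bernoulliFun_eval_zero]
    rcases Nat.even_or_odd N with h | h
    · rw [pow_succ, h.neg_one_pow]
      ring
    · rw [pow_succ, h.neg_one_pow, bernoulli_eq_zero_of_odd (n := N + 1 + 1)
        (by obtain ⟨j, rfl⟩ := h; exact ⟨j + 1, by ring⟩) (by omega)]
      push_cast
      ring

lemma fubini_moment (u v p a : ℝ) (hu : 0 ≤ u) (huv : u ≤ v) (ha : 0 < a) (hpa : 0 ≤ p - 1 - a) :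
    IntegrableOn (fun y => y ^ (a - 1) * ∫ x in u..v, cuspG y 0 p x) (Ioi 0) ∧
    ∫ y in Ioi (0 : ℝ), y ^ (a - 1) * (∫ x in u..v, cuspG y 0 p x)
      = Real.Gamma a * ∫ x in u..v, cuspP 0 (p - 1 - a) x := by
  have hpos : ∀ᵐ x ∂(volume.restrict (Ioc u v)), 0 < x := by
    filter_upwards [ae_restrict_mem measurableSet_Ioc] with x hx using lt_of_le_of_lt hu hx.1
  have hcont : Continuous (fun x : ℝ => x ^ (p - 1 - a)) := Real.continuous_rpow_const hpa
  have hint : Integrable (Function.uncurry fun x y => y ^ (a - 1) * cuspG y 0 p x)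
      ((volume.restrict (Ioc u v)).prod (volume.restrict (Ioi 0))) := by
    refine (integrable_prod_iff ?_).2 ⟨?_, ?_⟩
    · apply Measurable.aestronglyMeasurable
      simp only [cuspG, Function.uncurry_def]
      fun_prop
    · filter_upwards [hpos] with x hx
      exact (cuspG_moment x hx 0 p a ha).1
    · have h : IntegrableOn (fun x : ℝ => Real.Gamma a * x ^ (p - 1 - a)) (Ioc u v) :=
        ((hcont.const_smul (Real.Gamma a)).integrableOn_Icc).mono_set Ioc_subset_Icc_self
      refine Integrable.congr h ?_
      filter_upwards [hpos] with x hx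
      have h2 := (cuspG_moment x hx 0 p a ha).2
      simp only [cuspP] at h2
      rw [← h2]
      refine setIntegral_congr_fun measurableSet_Ioi fun y hy => ?_
      have hy : 0 < y := hy
      simp only [Function.uncurry, cuspG]
      rw [Real.norm_of_nonneg (by positivity)]
  have e : (fun y => y ^ (a - 1) * ∫ x in u..v, cuspG y 0 p x)
      = fun y => ∫ x in Ioc u v, y ^ (a - 1) * cuspG y 0 p x := by
    ext y
    rw [intervalIntegral.integral_of_le huv, integral_const_mul]
  rw [e]
  refine ⟨hint.integral_prod_right, ?_⟩
  rw [← integral_integral_swap hint, intervalIntegral.integral_of_le huv, ← integral_const_mul]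
  refine integral_congr_ae ?_
  filter_upwards [hpos] with x hx using (cuspG_moment x hx 0 p a ha).2

/-- Euler-Maclaurin remainder on the `m`-th interval -/
noncomputable def cuspPhi (p : ℝ) (N : ℕ) (x y : ℝ) : ℝ :=
  cuspG y 0 p x - (∫ t in x..(x + 1), cuspG y 0 p t)
      - ∑ k ∈ Finset.range (N + 1), (bernoulli (k + 1) : ℝ) / ((k + 1).factorial : ℝ) *
          (cuspG y k p (x + 1) - cuspG y k p x)

lemma cuspPhi_bound (q p : ℝ) (hq : 0 < q) (N : ℕ) : ∃ K : ℝ, 0 ≤ K ∧ ∀ x y, q ≤ x → 0 < y →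
    |cuspPhi p N x y| ≤ K * cuspE q y (N + 1) p x := by
  have hbc : Continuous (bernoulliFun (N + 1)) :=
    continuous_iff_continuousAt.2 fun t => (hasDerivAt_bernoulliFun (N + 1) t).continuousAt
  obtain ⟨K, hK⟩ := (isCompact_Icc (a := (0 : ℝ)) (b := 1)).exists_bound_of_continuousOn
    (f := fun t => bernoulliFun (N + 1) t / ((N + 1).factorial : ℝ))
    (hbc.div_const _).continuousOn
  have hK0 : 0 ≤ K := (norm_nonneg _).trans (hK 0 (by simp))
  refine ⟨K, hK0, fun x y hx hy => ?_⟩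
  have hx0 : 0 < x := hq.trans_le hx
  rw [cuspPhi, euler_maclaurin_unit (fun k => cuspG y k p) x
    (fun k t ht => cuspG_deriv y k p t (hx0.trans_le ht.1)) N, abs_mul, abs_pow, abs_neg, abs_one,
    one_pow, one_mul]
  have := intervalIntegral.norm_integral_le_of_norm_le_const (a := x) (b := x + 1)
    (C := K * cuspE q y (N + 1) p x)
    (f := fun t => bernoulliFun (N + 1) (t - x) / ((N + 1).factorial : ℝ) * cuspG y (N + 1) p t)
    (fun t ht => by
      rw [uIoc_of_le (by linarith)] at ht
      rw [norm_mul]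
      exact mul_le_mul (hK _ ⟨by linarith [ht.1], by linarith [ht.2]⟩)
        (cuspG_le q y x t hq hy hx ht.1.le ht.2 _ p) (norm_nonneg _) hK0)
  simpa using this

lemma cuspPhi_moment (n : ℕ) (p x : ℝ) (hp : (n : ℝ) + 1 < p) (hx : 0 < x) (N : ℕ) (hN : n ≤ N) :
    IntegrableOn (fun y => y ^ (p - n - 1 - 1) * cuspPhi p N x y) (Ioi 0) ∧
    ∫ y in Ioi (0 : ℝ), y ^ (p - n - 1 - 1) * cuspPhi p N x y = 0 := by
  set a := p - n - 1 with ha_def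
  have ha : 0 < a := by linarith
  have hpa : p - 1 - a = n := by rw [ha_def]; ring
  have e : (fun y => y ^ (a - 1) * cuspPhi p N x y) = fun y =>
      y ^ (a - 1) * cuspG y 0 p x - y ^ (a - 1) * (∫ t in x..(x + 1), cuspG y 0 p t)
      - ∑ k ∈ Finset.range (N + 1), (bernoulli (k + 1) : ℝ) / ((k + 1).factorial : ℝ) *
          (y ^ (a - 1) * cuspG y k p (x + 1) - y ^ (a - 1) * cuspG y k p x) := by
    ext y
    rw [cuspPhi, mul_sub, mul_sub, Finset.mul_sum]
    congr 1
    exact Finset.sum_congr rfl fun k _ => by ring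
  have h0 := cuspG_moment x hx 0 p a ha
  have hf := fubini_moment x (x + 1) p a hx.le (by linarith) ha (by rw [hpa]; positivity)
  have hk := fun k => cuspG_moment x hx k p a ha
  have hk1 := fun k => cuspG_moment (x + 1) (by linarith) k p a ha
  have hi1 : IntegrableOn (fun y => y ^ (a - 1) * cuspG y 0 p x
      - y ^ (a - 1) * (∫ t in x..(x + 1), cuspG y 0 p t)) (Ioi 0) := h0.1.sub hf.1
  have hi2 : ∀ k ∈ Finset.range (N + 1), IntegrableOn (fun y =>
      (bernoulli (k + 1) : ℝ) / ((k + 1).factorial : ℝ) *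
          (y ^ (a - 1) * cuspG y k p (x + 1) - y ^ (a - 1) * cuspG y k p x)) (Ioi 0) :=
    fun k _ => ((hk1 k).1.sub (hk k).1).const_mul _
  have hi3 := integrable_finsetSum _ hi2
  rw [e]
  refine ⟨hi1.sub hi3, ?_⟩
  rw [integral_sub hi1 hi3, integral_sub h0.1 hf.1, integral_finsetSum _ hi2]
  simp_rw [integral_const_mul]
  have : ∀ k, ∫ y in Ioi (0 : ℝ), (y ^ (a - 1) * cuspG y k p (x + 1) - y ^ (a - 1) * cuspG y k p x)
      = Real.Gamma a * (cuspP k n (x + 1) - cuspP k n x) := fun k => by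
    rw [integral_sub (hk1 k).1 (hk k).1, (hk1 k).2, (hk k).2, hpa]; ring
  simp_rw [this]
  rw [h0.2, hf.2, hpa]
  have em := euler_maclaurin_unit (fun k => cuspP k n) x
    (fun k t ht => cuspP_deriv k n t (hx.trans_le ht.1)) N
  simp only [cuspP_zero n (N + 1) (by omega), mul_zero, intervalIntegral.integral_zero] at em
  have em' := congrArg (fun z => Real.Gamma a * z) em
  simp only [mul_sub, mul_zero, Finset.mul_sum] at em' ⊢
  rw [← em']
  congr 1
  exact Finset.sum_congr rfl fun k _ => by ring

lemma cuspG_tendsto (y : ℝ) (hy : 0 < y) (k : ℕ) : ∀ p, Tendsto (cuspG y k p) atTop (𝓝 0) := by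
  induction k with
  | zero =>
    intro p
    have := tendsto_rpow_mul_exp_neg_mul_atTop_nhds_zero (p - 1) y hy
    refine this.congr fun x => ?_
    simp only [cuspG]
    rw [show -y * x = -(x * y) by ring]
  | succ k ih =>
    intro p
    have := ((ih (p - 1)).const_mul (p - 1)).sub ((ih p).const_mul y)
    simp only [mul_zero, sub_zero] at this
    exact this

lemma cuspPhi_hasSum (q p y : ℝ) (hq : 0 < q) (hp : 0 < p) (hy : 0 < y) (N : ℕ) :
    HasSum (fun m : ℕ => cuspPhi p N ((m : ℝ) + q) y)
      ((∑' m : ℕ, ((m : ℝ) + q) ^ (p - 1) * Real.exp (-(((m : ℝ) + q) * y)))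
        - (Real.Gamma p * y ^ (-p) - ∫ x in (0 : ℝ)..q, cuspG y 0 p x)
        + ∑ k ∈ Finset.range (N + 1), (bernoulli (k + 1) : ℝ) / ((k + 1).factorial : ℝ) *
          cuspG y k p q) := by
  obtain ⟨K, hK0, hK⟩ := cuspPhi_bound q p hq N
  have hsum : Summable (fun m : ℕ => cuspPhi p N ((m : ℝ) + q) y) :=
    Summable.of_norm_bounded ((summable_cuspE q y hq hy (N + 1) p).mul_left K)
      fun m => hK _ y (by linarith [(Nat.cast_nonneg m : (0 : ℝ) ≤ m)]) hy
  refine (hsum.hasSum_iff_tendsto_nat).2 ?_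
  have hgam := gamma_moment p y hp hy
  have hi : IntegrableOn (cuspG y 0 p) (Ioi 0) := by
    refine hgam.1.congr_fun (fun x _ => ?_) measurableSet_Ioi
    simp only [cuspG]
    rw [mul_comm y x]
  have hv : ∫ x in Ioi (0 : ℝ), cuspG y 0 p x = Real.Gamma p * y ^ (-p) := by
    rw [← hgam.2]
    refine setIntegral_congr_fun measurableSet_Ioi fun x _ => ?_
    simp only [cuspG]
    rw [mul_comm y x]
  have hII : ∀ u v : ℝ, 0 ≤ u → 0 ≤ v → IntervalIntegrable (cuspG y 0 p) volume u v :=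
    fun u v hu hv => ⟨hi.mono_set fun x hx => lt_of_le_of_lt hu hx.1,
      hi.mono_set fun x hx => lt_of_le_of_lt hv hx.1⟩
  have hc : Tendsto (fun m : ℕ => (m : ℝ) + q) atTop atTop :=
    tendsto_atTop_add_const_right _ _ tendsto_natCast_atTop_atTop
  have hpart : ∀ M : ℕ, ∑ m ∈ Finset.range M, cuspPhi p N ((m : ℝ) + q) y =
      (∑ m ∈ Finset.range M, cuspG y 0 p ((m : ℝ) + q))
      - ((∫ x in (0 : ℝ)..(M + q), cuspG y 0 p x) - ∫ x in (0 : ℝ)..q, cuspG y 0 p x)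
      - ∑ k ∈ Finset.range (N + 1), (bernoulli (k + 1) : ℝ) / ((k + 1).factorial : ℝ) *
          (cuspG y k p (M + q) - cuspG y k p q) := by
    intro M
    induction M with
    | zero => simp
    | succ M ih =>
      have hM : (0 : ℝ) ≤ M + q := by positivity
      rw [Finset.sum_range_succ, ih,
        Finset.sum_range_succ (fun m : ℕ => cuspG y 0 p ((m : ℝ) + q)) M, cuspPhi]
      push_cast
      rw [show (M : ℝ) + 1 + q = M + q + 1 by ring,
        ← intervalIntegral.integral_add_adjacent_intervals (hII 0 (M + q) le_rfl hM)
          (hII (M + q) (M + q + 1) hM (by linarith))]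
      have : ∑ k ∈ Finset.range (N + 1), (bernoulli (k + 1) : ℝ) / ((k + 1).factorial : ℝ) *
          (cuspG y k p (M + q + 1) - cuspG y k p q) =
          ∑ k ∈ Finset.range (N + 1), (bernoulli (k + 1) : ℝ) / ((k + 1).factorial : ℝ) *
          (cuspG y k p (M + q) - cuspG y k p q) +
          ∑ k ∈ Finset.range (N + 1), (bernoulli (k + 1) : ℝ) / ((k + 1).factorial : ℝ) *
          (cuspG y k p (M + q + 1) - cuspG y k p (M + q)) := by
        rw [← Finset.sum_add_distrib]
        exact Finset.sum_congr rfl fun k _ => by ring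
      rw [this]
      ring
  simp_rw [hpart]
  have t1 : Tendsto (fun M : ℕ => ∑ m ∈ Finset.range M, cuspG y 0 p ((m : ℝ) + q)) atTop
      (𝓝 (∑' m : ℕ, ((m : ℝ) + q) ^ (p - 1) * Real.exp (-(((m : ℝ) + q) * y)))) :=
    (summable_base q y (p - 1) hq hy).hasSum.tendsto_sum_nat
  have t2 := intervalIntegral_tendsto_integral_Ioi 0 hi hc
  rw [hv] at t2
  have t3 : Tendsto (fun M : ℕ => ∑ k ∈ Finset.range (N + 1),
      (bernoulli (k + 1) : ℝ) / ((k + 1).factorial : ℝ) * (cuspG y k p (M + q) - cuspG y k p q))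
      atTop (𝓝 (∑ k ∈ Finset.range (N + 1),
      (bernoulli (k + 1) : ℝ) / ((k + 1).factorial : ℝ) * (0 - cuspG y k p q))) :=
    tendsto_finsetSum _ fun k _ =>
      (((cuspG_tendsto y hy k p).comp hc).sub_const _).const_mul _
  have := (t1.sub (t2.sub_const (∫ x in (0 : ℝ)..q, cuspG y 0 p x))).sub t3
  simpa using this

lemma bernoulli_final (n : ℕ) (q : ℝ) :
    (∫ x in (0 : ℝ)..q, cuspP 0 n x) +
      ∑ k ∈ Finset.range (n + 2), (bernoulli (k + 1) : ℝ) / ((k + 1).factorial : ℝ) * cuspP k n q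
      = (Polynomial.aeval q (Polynomial.bernoulli (n + 1))) / ((n : ℝ) + 1) := by
  rw [Finset.sum_range_succ, cuspP_zero n (n + 1) (by omega), mul_zero, add_zero]
  simp only [cuspP, Real.rpow_natCast, integral_pow]
  rw [Polynomial.bernoulli, map_sum,
    Finset.sum_range_succ' _ (n + 1), add_comm, add_div, Finset.sum_div]
  congr 1
  · refine Finset.sum_congr rfl fun k hk => ?_
    have hk' : k ≤ n := by simpa [Nat.lt_succ_iff] using hk
    rw [cuspP_formula n k hk', Polynomial.aeval_monomial, Nat.add_sub_add_right]
    have h1 : ((n : ℝ) + 1) * (n.descFactorial k : ℝ) =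
        ((k + 1).factorial : ℝ) * ((n + 1).choose (k + 1) : ℝ) := by
      rw [← Nat.cast_mul, ← Nat.descFactorial_eq_factorial_mul_choose,
        Nat.succ_descFactorial_succ]
      push_cast; ring
    simp only [eq_ratCast]
    push_cast
    have hn : (n : ℝ) + 1 ≠ 0 := by positivity
    have hf : ((k + 1).factorial : ℝ) ≠ 0 := by positivity
    rw [eq_div_iff hn, div_mul_eq_mul_div, div_mul_eq_mul_div, div_eq_iff hf]
    linear_combination (bernoulli (k + 1) : ℝ) * q ^ (n - k) * h1
  · simp [Polynomial.aeval_monomial]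

/-- The n-th moment of the cusp density of the integer quantum Hall state on the
punctured Poincaré disk, in the cusp coordinate `y = -log|z|²`:
`(Γ(p)/Γ(p-n-1)) ∫₀^∞ y^{-(n+2)} (yᵖ S_p(y)/Γ(p) - 1) dy = -B_{n+1}(q)/(n+1)`,
where `S_p(y) = ∑ (m+q)^{p-1} e^{-(m+q)y}` and `B_{n+1}` is the Bernoulli
polynomial with `B₁(x) = x - 1/2`. In particular the moment is independent of `p`. -/
theorem nth_moment_cusp (n : ℕ) (q p : ℝ) (hq : 0 < q) (hp : (n : ℝ) + 1 < p) :
    IntegrableOn (fun y : ℝ =>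
        y ^ (-((n : ℝ) + 2)) *
          (y ^ p * (∑' m : ℕ, ((m : ℝ) + q) ^ (p - 1) * Real.exp (-(((m : ℝ) + q) * y))) /
              Real.Gamma p - 1))
      (Set.Ioi 0) ∧
    Real.Gamma p / Real.Gamma (p - n - 1) *
        ∫ y in Set.Ioi (0 : ℝ),
          y ^ (-((n : ℝ) + 2)) *
            (y ^ p * (∑' m : ℕ, ((m : ℝ) + q) ^ (p - 1) * Real.exp (-(((m : ℝ) + q) * y))) /
                Real.Gamma p - 1)
      = -(Polynomial.aeval q (Polynomial.bernoulli (n + 1))) / ((n : ℝ) + 1) := by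
  set a := p - n - 1 with ha_def
  have ha : 0 < a := by linarith
  have hp0 : 0 < p := by have : (0 : ℝ) ≤ n := Nat.cast_nonneg n; linarith
  have hpa : p - 1 - a = n := by rw [ha_def]; ring
  have hGp : 0 < Real.Gamma p := Real.Gamma_pos_of_pos hp0
  have hGa : 0 < Real.Gamma a := Real.Gamma_pos_of_pos ha
  set S : ℝ → ℝ := fun y => ∑' m : ℕ, ((m : ℝ) + q) ^ (p - 1) * Real.exp (-(((m : ℝ) + q) * y))
    with hS
  obtain ⟨K, hK0, hK⟩ := cuspPhi_bound q p hq (n + 1)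
  have hmq : ∀ m : ℕ, q ≤ (m : ℝ) + q := fun m => by
    linarith [(Nat.cast_nonneg m : (0 : ℝ) ≤ m)]
  have hphi := fun m : ℕ => cuspPhi_moment n p ((m : ℝ) + q) hp (hq.trans_le (hmq m)) (n + 1)
    (by omega)
  rw [← ha_def] at hphi
  have hE := fun m : ℕ => cuspE_moment q ((m : ℝ) + q) (hq.trans_le (hmq m)) (n + 2) p a ha
  have hsumE : Summable (fun m : ℕ =>
      K * (cuspC q (n + 2) p a * ((m : ℝ) + q) ^ (p - 1 - a - ((n + 2 : ℕ) : ℝ)))) := by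
    refine Summable.mul_left _ (Summable.mul_left _ ?_)
    refine ((Real.summable_one_div_nat_add_rpow q 2).2 (by norm_num)).congr fun m => ?_
    have h0 : (0 : ℝ) < m + q := hq.trans_le (hmq m)
    rw [hpa, abs_of_pos h0, one_div, ← Real.rpow_neg h0.le]
    congr 1
    push_cast
    ring
  have hsum : Summable fun m : ℕ => ∫ y in Ioi (0 : ℝ),
      ‖y ^ (a - 1) * cuspPhi p (n + 1) ((m : ℝ) + q) y‖ := by
    refine Summable.of_nonneg_of_le (fun m => integral_nonneg fun _ => norm_nonneg _)
      (fun m => ?_) hsumE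
    rw [← (hE m).2, ← integral_const_mul]
    refine setIntegral_mono_on (hphi m).1.norm ((hE m).1.const_mul K) measurableSet_Ioi
      fun y hy => ?_
    have hy : 0 < y := hy
    have hya : 0 < y ^ (a - 1) := Real.rpow_pos_of_pos hy _
    rw [norm_mul, Real.norm_of_nonneg hya.le, Real.norm_eq_abs]
    calc _ ≤ y ^ (a - 1) * (K * cuspE q y (n + 2) p (m + q)) :=
          mul_le_mul_of_nonneg_left (hK _ y (hmq m) hy) hya.le
      _ = _ := by ring
  obtain ⟨hHi, hHs⟩ := integrable_hasSum (μ := volume.restrict (Ioi 0))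
    (fun m y => y ^ (a - 1) * cuspPhi p (n + 1) ((m : ℝ) + q) y)
    (fun y => y ^ (a - 1) * (S y
        - (Real.Gamma p * y ^ (-p) - ∫ x in (0 : ℝ)..q, cuspG y 0 p x)
        + ∑ k ∈ Finset.range (n + 2), (bernoulli (k + 1) : ℝ) / ((k + 1).factorial : ℝ) *
          cuspG y k p q)) (fun m => (hphi m).1) hsum (by
      filter_upwards [ae_restrict_mem measurableSet_Ioi] with y hy
      exact (cuspPhi_hasSum q p y hq hp0 hy (n + 1)).mul_left _)
  have hf := fubini_moment 0 q p a le_rfl hq.le ha (by rw [hpa]; positivity)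
  have hH0 := hHs.unique (a₂ := 0) (by
    simp only [(hphi _).2]
    exact hasSum_zero)
  have hHf : IntegrableOn (fun y => y ^ (a - 1) * (S y
        - (Real.Gamma p * y ^ (-p) - ∫ x in (0 : ℝ)..q, cuspG y 0 p x)
        + ∑ k ∈ Finset.range (n + 2), (bernoulli (k + 1) : ℝ) / ((k + 1).factorial : ℝ) *
          cuspG y k p q)
        - y ^ (a - 1) * ∫ x in (0 : ℝ)..q, cuspG y 0 p x) (Ioi 0) := hHi.sub hf.1
  have hk := fun k => cuspG_moment q hq k p a ha
  have hi2 : ∀ k ∈ Finset.range (n + 2), IntegrableOn (fun y =>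
      (bernoulli (k + 1) : ℝ) / ((k + 1).factorial : ℝ) * (y ^ (a - 1) * cuspG y k p q)) (Ioi 0) :=
    fun k _ => (hk k).1.const_mul _
  have hi3 := integrable_finsetSum _ hi2
  have e : EqOn (fun y => (Real.Gamma p)⁻¹ * ((y ^ (a - 1) * (S y
        - (Real.Gamma p * y ^ (-p) - ∫ x in (0 : ℝ)..q, cuspG y 0 p x)
        + ∑ k ∈ Finset.range (n + 2), (bernoulli (k + 1) : ℝ) / ((k + 1).factorial : ℝ) *
          cuspG y k p q)
        - y ^ (a - 1) * ∫ x in (0 : ℝ)..q, cuspG y 0 p x)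
        - ∑ k ∈ Finset.range (n + 2), (bernoulli (k + 1) : ℝ) / ((k + 1).factorial : ℝ) *
          (y ^ (a - 1) * cuspG y k p q)))
      (fun y => y ^ (-((n : ℝ) + 2)) * (y ^ p * S y / Real.Gamma p - 1)) (Ioi 0) := by
    intro y hy
    have hy : 0 < y := hy
    have h1 : y ^ (a - 1) = y ^ (-((n : ℝ) + 2)) * y ^ p := by
      rw [← Real.rpow_add hy]; congr 1; rw [ha_def]; ring
    have h2 : y ^ p * y ^ (-p) = 1 := by rw [← Real.rpow_add hy]; simp
    have h3 : ∑ k ∈ Finset.range (n + 2), (bernoulli (k + 1) : ℝ) / ((k + 1).factorial : ℝ) *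
          (y ^ (a - 1) * cuspG y k p q) = y ^ (a - 1) * ∑ k ∈ Finset.range (n + 2),
          (bernoulli (k + 1) : ℝ) / ((k + 1).factorial : ℝ) * cuspG y k p q := by
      rw [Finset.mul_sum]
      exact Finset.sum_congr rfl fun k _ => by ring
    simp only
    rw [h3, h1]
    field_simp
    linear_combination (-Real.Gamma p) * h2
  have hfin := ((hHf.sub hi3).const_mul (Real.Gamma p)⁻¹)
  refine ⟨IntegrableOn.congr_fun hfin e measurableSet_Ioi, ?_⟩
  rw [← setIntegral_congr_fun measurableSet_Ioi e, integral_const_mul,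
    integral_sub hHf hi3, integral_sub hHi hf.1, hH0, hf.2,
    integral_finsetSum _ hi2]
  simp_rw [integral_const_mul]
  have h4 : ∑ k ∈ Finset.range (n + 2), (bernoulli (k + 1) : ℝ) / ((k + 1).factorial : ℝ) *
      ∫ y in Ioi (0 : ℝ), y ^ (a - 1) * cuspG y k p q = Real.Gamma a * ∑ k ∈ Finset.range (n + 2),
      (bernoulli (k + 1) : ℝ) / ((k + 1).factorial : ℝ) * cuspP k n q := by
    rw [Finset.mul_sum]
    refine Finset.sum_congr rfl fun k _ => ?_
    rw [(hk k).2, hpa]; ring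
  rw [h4, hpa, neg_div, ← bernoulli_final n q]
  field_simp
  ring
end

section
/- Let q > 0 and let p > 1 be real. Then the functions y ↦ y^{−2}(y^p S_p(y)/Γ(p) − 1) and y ↦ y^{−2}(y^{p+1} S_{p+1}(y)/Γ(p+1) − 1) are both integrable on (0, ∞), and (p−1) ∫_0^∞ y^{−2}(y^p S_p(y)/Γ(p) − 1) dy = p ∫_0^∞ y^{−2}(y^{p+1} S_{p+1}(y)/Γ(p+1) − 1) dy; that is, the charge moment M_0(p) of the cusp satisfies the recursion M_0(p) = M_0(p+1). -/
open MeasureTheory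

/-- `S_p(y) = ∑_{n≥0} (n+q)^{p-1} e^{-(n+q)y}`. -/
noncomputable def cuspS (q p y : ℝ) : ℝ :=
  ∑' n : ℕ, ((n : ℝ) + q) ^ (p - 1) * Real.exp (-(((n : ℝ) + q) * y))

lemma midpoint_bound (g g1 g2 W : ℝ → ℝ) (m : ℝ)
    (hg : ∀ x ∈ Set.Icc (m - 1/2) (m + 1/2), HasDerivAt g (g1 x) x)
    (hg1 : ∀ x ∈ Set.Icc (m - 1/2) (m + 1/2), HasDerivAt g1 (g2 x) x)
    (hg2 : ContinuousOn g2 (Set.Icc (m - 1/2) (m + 1/2)))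
    (hW : ∀ x ∈ Set.Icc (m - 1/2) (m + 1/2), |g2 x| ≤ W x)
    (hWi : IntervalIntegrable W volume (m - 1/2) (m + 1/2)) :
    |g m - ∫ x in (m - 1/2)..(m + 1/2), g x| ≤ ∫ x in (m - 1/2)..(m + 1/2), W x := by
  set V := ∫ x in (m - 1/2)..(m + 1/2), W x with hV
  have hab : m - 1/2 ≤ m + 1/2 := by linarith
  have hmem : m ∈ Set.Icc (m - 1/2) (m + 1/2) := ⟨by linarith, by linarith⟩
  have hle : ∀ x ∈ Set.Icc (m - 1/2) (m + 1/2), ∀ z ∈ Set.Icc (m - 1/2) (m + 1/2), x ≤ z →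
      |g1 z - g1 x| ≤ V := by
    intro x hx z hz hxz
    have hsub : Set.Icc x z ⊆ Set.Icc (m - 1/2) (m + 1/2) := Set.Icc_subset_Icc hx.1 hz.2
    have hi : IntervalIntegrable g2 volume x z := by
      apply ContinuousOn.intervalIntegrable
      rw [Set.uIcc_of_le hxz]; exact hg2.mono hsub
    rw [← intervalIntegral.integral_eq_sub_of_hasDerivAt
      (fun t ht => hg1 t (hsub (by rwa [Set.uIcc_of_le hxz] at ht))) hi]
    have hWi' : IntervalIntegrable W volume x z := hWi.mono_set (by
      rw [Set.uIcc_of_le hxz, Set.uIcc_of_le hab]; exact hsub)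
    calc |∫ t in x..z, g2 t| ≤ ∫ t in x..z, W t := by
          rw [← Real.norm_eq_abs]
          refine intervalIntegral.norm_integral_le_of_norm_le hxz ?_ hWi'
          exact Filter.Eventually.of_forall fun t ht => hW t (hsub ⟨ht.1.le, ht.2⟩)
      _ ≤ V := by
          apply intervalIntegral.integral_mono_interval hx.1 hxz hz.2 _ hWi
          refine (ae_restrict_iff' measurableSet_Ioc).2 (Filter.Eventually.of_forall fun t ht => ?_)
          exact (abs_nonneg _).trans (hW t ⟨ht.1.le, ht.2⟩)
  have hd : ∀ x ∈ Set.Icc (m - 1/2) (m + 1/2), |g1 x - g1 m| ≤ V := by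
    intro x hx
    rcases le_total x m with h | h
    · rw [abs_sub_comm]; exact hle x hx m hmem h
    · exact hle m hmem x hx h
  have hV0 : 0 ≤ V := (abs_nonneg _).trans (hd m hmem)
  have hT : ∀ x ∈ Set.Icc (m - 1/2) (m + 1/2), |g x - g m - g1 m * (x - m)| ≤ V := by
    intro x hx
    have := (convex_Icc (m - 1/2) (m + 1/2)).norm_image_sub_le_of_norm_hasDerivWithin_le
      (f := fun x => g x - g1 m * x) (f' := fun x => g1 x - g1 m) (C := V)
      (fun t ht => ((hg t ht).sub (by simpa using (hasDerivAt_id t).const_mul (g1 m))).hasDerivWithinAt)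
      hd hmem hx
    have h2 : |x - m| ≤ 1 := by rw [abs_le]; constructor <;> linarith [hx.1, hx.2]
    rw [Real.norm_eq_abs, Real.norm_eq_abs] at this
    have e : g x - g m - g1 m * (x - m) = g x - g1 m * x - (g m - g1 m * m) := by ring
    rw [e]
    nlinarith
  have hgc : ContinuousOn g (Set.uIcc (m - 1/2) (m + 1/2)) := by
    rw [Set.uIcc_of_le hab]
    exact fun x hx => (hg x hx).continuousAt.continuousWithinAt
  have hgi : IntervalIntegrable g volume (m - 1/2) (m + 1/2) := hgc.intervalIntegrable
  have e : ∫ x in (m - 1/2)..(m + 1/2), (g x - g m - g1 m * (x - m))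
      = (∫ x in (m - 1/2)..(m + 1/2), g x) - g m := by
    rw [intervalIntegral.integral_sub (hgi.sub (by simp)) (Continuous.intervalIntegrable (by fun_prop) _ _),
      intervalIntegral.integral_sub hgi (by simp), intervalIntegral.integral_const_mul,
      intervalIntegral.integral_sub (Continuous.intervalIntegrable (by fun_prop) _ _) (by simp)]
    simp
    ring_nf
  rw [abs_sub_comm, ← e]
  have := intervalIntegral.norm_integral_le_of_norm_le_const (a := m - 1/2) (b := m + 1/2) (C := V)
    (f := fun x => g x - g m - g1 m * (x - m)) (fun x hx => by
      rw [Set.uIoc_of_le hab] at hx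
      exact hT x ⟨hx.1.le, hx.2⟩)
  calc _ ≤ _ := this
    _ = V := by
      have : m + 1/2 - (m - 1/2) = 1 := by ring
      rw [this]; simp

lemma rpow_le_exp_half (p x : ℝ) (hp : 0 < p) (hx : 0 < x) :
    x ^ p ≤ (2 * p) ^ p * Real.exp (x / 2) := by
  have h1 : x / (2 * p) ≤ Real.exp (x / (2 * p)) := by
    linarith [Real.add_one_le_exp (x / (2 * p))]
  have h2 := Real.rpow_le_rpow (by positivity) h1 hp.le
  rw [← Real.exp_mul, Real.div_rpow hx.le (by positivity), div_le_iff₀ (by positivity)] at h2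
  have : x / (2 * p) * p = x / 2 := by field_simp
  rw [this] at h2
  linarith

lemma cusp_term_bound (q p y : ℝ) (hq : 0 < q) (hp : 0 < p) (hy : 0 < y) (n : ℕ) :
    y ^ p * (((n : ℝ) + q) ^ (p - 1) * Real.exp (-(((n : ℝ) + q) * y)))
      ≤ (2 * p) ^ p / q * Real.exp (-(y / 2) * ((n : ℝ) + q)) := by
  have hm : 0 < (n : ℝ) + q := by positivity
  have hqm : q ≤ (n : ℝ) + q := by simp
  set m := (n : ℝ) + q
  have h := rpow_le_exp_half p (m * y) hp (by positivity)
  rw [Real.mul_rpow hm.le hy.le] at h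
  have e1 : m ^ (p - 1) = m ^ p / m := Real.rpow_sub_one hm.ne' p
  have e2 : Real.exp (-(y / 2) * m) = Real.exp (m * y / 2) * Real.exp (-(m * y)) := by
    rw [← Real.exp_add]; congr 1; ring
  rw [e1, e2]
  calc y ^ p * (m ^ p / m * Real.exp (-(m * y)))
      = (m ^ p * y ^ p) * Real.exp (-(m * y)) / m := by ring
    _ ≤ ((2 * p) ^ p * Real.exp (m * y / 2)) * Real.exp (-(m * y)) / q := by gcongr
    _ = _ := by ring

lemma cusp_majorant_summable (q y : ℝ) (hq : 0 < q) (hy : 0 < y) :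
    Summable fun n : ℕ => Real.exp (-(y / 2) * ((n : ℝ) + q)) :=
  Real.summable_exp_nat_mul_of_ge (by linarith) (fun i => by linarith)

lemma cusp_summable (q p y : ℝ) (hq : 0 < q) (hp : 0 < p) (hy : 0 < y) :
    Summable fun n : ℕ => ((n : ℝ) + q) ^ (p - 1) * Real.exp (-(((n : ℝ) + q) * y)) := by
  have : Summable fun n : ℕ =>
      y ^ p * (((n : ℝ) + q) ^ (p - 1) * Real.exp (-(((n : ℝ) + q) * y))) :=
    Summable.of_nonneg_of_le (fun n => by positivity) (cusp_term_bound q p y hq hp hy)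
      ((cusp_majorant_summable q y hq hy).mul_left _)
  exact (summable_mul_left_iff (by positivity)).1 this

lemma cuspS_bound_large (q p : ℝ) (hq : 0 < q) (hp : 0 < p) :
    ∃ M : ℝ, ∀ y : ℝ, 1 ≤ y → |y ^ p * cuspS q p y| ≤ M := by
  refine ⟨∑' n : ℕ, (2 * p) ^ p / q * Real.exp (-((1:ℝ) / 2) * ((n : ℝ) + q)), fun y hy => ?_⟩
  have hy0 : 0 < y := by linarith
  have hnn : 0 ≤ cuspS q p y := tsum_nonneg fun n => by positivity
  rw [abs_of_nonneg (by positivity), cuspS, ← tsum_mul_left]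
  refine Summable.tsum_le_tsum (fun n => ?_) ((cusp_summable q p y hq hp hy0).mul_left _)
    ((cusp_majorant_summable q 1 hq one_pos).mul_left _)
  refine (cusp_term_bound q p y hq hp hy0 n).trans ?_
  have : -(y / 2) * ((n : ℝ) + q) ≤ -((1:ℝ) / 2) * ((n : ℝ) + q) := by
    have hm : 0 < (n : ℝ) + q := by positivity
    nlinarith
  gcongr

lemma neg_mul_deriv (c z : ℝ) : HasDerivAt (fun z : ℝ => -(c * z)) (-c) z := by
  have := (hasDerivAt_id' z).const_mul (-c)
  simpa [neg_mul] using this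

lemma cuspS_hasDerivAt (q p y : ℝ) (hq : 0 < q) (hp : 0 < p) (hy : 0 < y) :
    HasDerivAt (cuspS q p) (-cuspS q (p + 1) y) y := by
  have hy2 : 0 < y / 2 := by linarith
  have key := hasDerivAt_tsum_of_isPreconnected
    (u := fun n : ℕ => ((n : ℝ) + q) ^ (p + 1 - 1) * Real.exp (-(((n : ℝ) + q) * (y / 2))))
    (g := fun (n : ℕ) (z : ℝ) => ((n : ℝ) + q) ^ (p - 1) * Real.exp (-(((n : ℝ) + q) * z)))
    (g' := fun (n : ℕ) (z : ℝ) => -(((n : ℝ) + q) ^ (p + 1 - 1) * Real.exp (-(((n : ℝ) + q) * z))))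
    (t := Set.Ioi (y / 2)) (y₀ := y) (y := y)
    (cusp_summable q (p + 1) (y / 2) hq (by linarith) hy2) isOpen_Ioi isPreconnected_Ioi
    (fun n z hz => by
      have hm : 0 < (n : ℝ) + q := by positivity
      have h1 : HasDerivAt (fun z : ℝ => -(((n : ℝ) + q) * z)) (-((n : ℝ) + q)) z := by
        exact neg_mul_deriv _ _
      have h2 := h1.exp.const_mul (((n : ℝ) + q) ^ (p - 1))
      refine h2.congr_deriv ?_
      rw [Real.rpow_sub_one hm.ne', add_sub_cancel_right]
      field_simp)
    (fun n z hz => by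
      have hm : 0 < (n : ℝ) + q := by positivity
      have hz' : y / 2 ≤ z := le_of_lt hz
      rw [norm_neg, Real.norm_eq_abs, abs_of_nonneg (by positivity)]
      gcongr)
    (by simp only [Set.mem_Ioi]; linarith) (cusp_summable q p y hq hp hy)
    (by simp only [Set.mem_Ioi]; linarith)
  rw [tsum_neg] at key
  exact key

lemma integrableOn_rpow_exp (s y : ℝ) (hs : 0 < s) (hy : 0 < y) :
    IntegrableOn (fun x : ℝ => x ^ (s - 1) * Real.exp (-(y * x))) (Set.Ioi 0) := by
  have := integrableOn_rpow_mul_exp_neg_mul_rpow (p := 1) (s := s - 1) (b := y)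
    (by linarith) one_pos hy
  simpa using this

lemma cusp_g_deriv (s y x : ℝ) (hx : 0 < x) :
    HasDerivAt (fun x : ℝ => x ^ s * Real.exp (-(y * x)))
      (s * (x ^ (s - 1) * Real.exp (-(y * x))) - y * (x ^ s * Real.exp (-(y * x)))) x := by
  have h1 : HasDerivAt (fun z : ℝ => -(y * z)) (-y) x := by
    exact neg_mul_deriv _ _
  have h2 := (Real.hasDerivAt_rpow_const (p := s) (Or.inl hx.ne')).mul h1.exp
  refine h2.congr_deriv ?_
  ring

lemma cusp_sum_bound (q p a y : ℝ) (hq : 0 < q) (hp : 1 < p) (ha : 0 < a) (hpa : 2 < p + a)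
    (hy : 0 < y) (N : ℕ) :
    |∑ n ∈ Finset.range N, ((n : ℝ) + 1 + q) ^ (p - 1) * Real.exp (-(y * ((n : ℝ) + 1 + q)))
      - ∫ x in (q + 1/2)..(q + 1/2 + N), x ^ (p - 1) * Real.exp (-(y * x))|
      ≤ |(p - 1) * (p - 2)| * (q + 1/2) ^ (-a) * ((1 / y) ^ (p + a - 2) * Real.Gamma (p + a - 2))
        + 2 * (p - 1) * y * ((1 / y) ^ (p - 1) * Real.Gamma (p - 1))
        + y ^ 2 * ((1 / y) ^ p * Real.Gamma p) := by
  set c := q + 1/2 with hc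
  have hc0 : 0 < c := by positivity
  set A := |(p - 1) * (p - 2)| * c ^ (-a) with hA
  have hA0 : 0 ≤ A := by positivity
  let W : ℝ → ℝ := fun x => A * (x ^ (p + a - 2 - 1) * Real.exp (-(y * x)))
    + 2 * (p - 1) * y * (x ^ (p - 1 - 1) * Real.exp (-(y * x)))
    + y ^ 2 * (x ^ (p - 1) * Real.exp (-(y * x)))
  have i1 := integrableOn_rpow_exp (p + a - 2) y (by linarith) hy
  have i2 := integrableOn_rpow_exp (p - 1) y (by linarith) hy
  have i3 := integrableOn_rpow_exp p y (by linarith) hy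
  have hWi : IntegrableOn W (Set.Ioi 0) :=
    ((i1.const_mul A).add (i2.const_mul (2 * (p - 1) * y))).add (i3.const_mul (y ^ 2))
  have hWint : ∫ x in Set.Ioi 0, W x = A * ((1 / y) ^ (p + a - 2) * Real.Gamma (p + a - 2))
        + 2 * (p - 1) * y * ((1 / y) ^ (p - 1) * Real.Gamma (p - 1))
        + y ^ 2 * ((1 / y) ^ p * Real.Gamma p) := by
    have e1 := integral_add ((i1.const_mul A).add (i2.const_mul (2 * (p - 1) * y)))
      (i3.const_mul (y ^ 2))
    have e2 := integral_add (i1.const_mul A) (i2.const_mul (2 * (p - 1) * y))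
    simp only [Pi.add_apply] at e1
    rw [e2, integral_const_mul, integral_const_mul, integral_const_mul,
      Real.integral_rpow_mul_exp_neg_mul_Ioi (by linarith) hy,
      Real.integral_rpow_mul_exp_neg_mul_Ioi (by linarith) hy,
      Real.integral_rpow_mul_exp_neg_mul_Ioi (by linarith) hy] at e1
    exact e1
  have hW0 : ∀ x, 0 < x → 0 ≤ W x := by
    intro x hx
    have : 0 < p - 1 := by linarith
    simp only [W]; positivity
  have hIi : ∀ (f : ℝ → ℝ), IntegrableOn f (Set.Ioi 0) → ∀ u v : ℝ, 0 < u → u ≤ v →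
      IntervalIntegrable f volume u v := by
    intro f hf u v hu huv
    rw [intervalIntegrable_iff_integrableOn_Ioc_of_le huv]
    exact hf.mono_set fun t ht => hu.trans ht.1
  let g : ℝ → ℝ := fun x => x ^ (p - 1) * Real.exp (-(y * x))
  have hstep : ∀ n : ℕ, |((n : ℝ) + 1 + q) ^ (p - 1) * Real.exp (-(y * ((n : ℝ) + 1 + q)))
      - ∫ x in (c + (n : ℝ))..(c + ((n + 1 : ℕ) : ℝ)), g x|
      ≤ ∫ x in (c + (n : ℝ))..(c + ((n + 1 : ℕ) : ℝ)), W x := by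
    intro n
    have e1 : c + (n : ℝ) = ((n : ℝ) + 1 + q) - 1/2 := by rw [hc]; ring
    have e2 : c + ((n + 1 : ℕ) : ℝ) = ((n : ℝ) + 1 + q) + 1/2 := by rw [hc]; push_cast; ring
    rw [e1, e2]
    have hn : (0 : ℝ) ≤ n := n.cast_nonneg
    have hpos : ∀ x ∈ Set.Icc (((n : ℝ) + 1 + q) - 1/2) (((n : ℝ) + 1 + q) + 1/2), c ≤ x := by
      intro x hx; have := hx.1; rw [hc]; linarith
    refine midpoint_bound g
      (fun x => (p - 1) * (x ^ (p - 1 - 1) * Real.exp (-(y * x))) - y * (x ^ (p - 1) * Real.exp (-(y * x))))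
      (fun x => (p - 1) * ((p - 1 - 1) * (x ^ (p - 1 - 1 - 1) * Real.exp (-(y * x)))
          - y * (x ^ (p - 1 - 1) * Real.exp (-(y * x))))
        - y * ((p - 1) * (x ^ (p - 1 - 1) * Real.exp (-(y * x)))
          - y * (x ^ (p - 1) * Real.exp (-(y * x))))) W _
      ?_ ?_ ?_ ?_ ?_
    · intro x hx
      exact cusp_g_deriv (p - 1) y x (hc0.trans_le (hpos x hx))
    · intro x hx
      have hx0 := hc0.trans_le (hpos x hx)
      exact ((cusp_g_deriv (p - 1 - 1) y x hx0).const_mul (p - 1)).sub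
        ((cusp_g_deriv (p - 1) y x hx0).const_mul y)
    · have hr : ∀ r : ℝ, ContinuousOn (fun x : ℝ => x ^ r)
          (Set.Icc (((n : ℝ) + 1 + q) - 1/2) (((n : ℝ) + 1 + q) + 1/2)) := fun r x hx =>
        (Real.continuousAt_rpow_const x r
          (Or.inl (hc0.trans_le (hpos x hx)).ne')).continuousWithinAt
      have he : ContinuousOn (fun x : ℝ => Real.exp (-(y * x)))
          (Set.Icc (((n : ℝ) + 1 + q) - 1/2) (((n : ℝ) + 1 + q) + 1/2)) := by fun_prop
      have hr1 := (hr (p - 1 - 1 - 1)).mul he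
      have hr2 := (hr (p - 1 - 1)).mul he
      have hr3 := (hr (p - 1)).mul he
      exact (((hr1.const_mul _).sub (hr2.const_mul _)).const_mul _).sub
        (((hr2.const_mul _).sub (hr3.const_mul _)).const_mul _)
    · intro x hx
      have hcx := hpos x hx
      have hx0 := hc0.trans_le hcx
      have hp1 : 0 < p - 1 := by linarith
      have k1 : x ^ (p - 1 - 1 - 1) ≤ c ^ (-a) * x ^ (p + a - 2 - 1) := by
        have : x ^ (p - 1 - 1 - 1) = x ^ (-a) * x ^ (p + a - 2 - 1) := by
          rw [← Real.rpow_add hx0]; congr 1; ring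
        rw [this]
        gcongr ?_ * _
        exact Real.rpow_le_rpow_of_nonpos hc0 hcx (by linarith)
      have t1 : |(p - 1) * (p - 2) * (x ^ (p - 1 - 1 - 1) * Real.exp (-(y * x)))|
          ≤ A * (x ^ (p + a - 2 - 1) * Real.exp (-(y * x))) := by
        rw [abs_mul, abs_of_nonneg (a := x ^ (p - 1 - 1 - 1) * Real.exp (-(y * x))) (by positivity)]
        calc _ ≤ |(p - 1) * (p - 2)| * ((c ^ (-a) * x ^ (p + a - 2 - 1)) * Real.exp (-(y * x))) := by
              gcongr
          _ = _ := by rw [hA]; ring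
      have t2 : 0 ≤ 2 * (p - 1) * y * (x ^ (p - 1 - 1) * Real.exp (-(y * x))) := by positivity
      have t3 : 0 ≤ y ^ 2 * (x ^ (p - 1) * Real.exp (-(y * x))) := by positivity
      rw [abs_le] at t1 ⊢
      simp only [W]
      constructor <;> nlinarith [t1.1, t1.2]
    · exact hIi W hWi _ _ (by linarith) (by linarith)
  have hcn : ∀ n : ℕ, 0 < c + (n : ℝ) := fun n => by positivity
  have hcs : ∀ n : ℕ, c + (n : ℝ) ≤ c + ((n + 1 : ℕ) : ℝ) := fun n => by push_cast; linarith
  have s1 := intervalIntegral.sum_integral_adjacent_intervals (f := g) (μ := volume)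
    (a := fun k : ℕ => c + (k : ℝ)) (n := N) (fun k _ => hIi g i3 _ _ (hcn k) (hcs k))
  have s2 := intervalIntegral.sum_integral_adjacent_intervals (f := W) (μ := volume)
    (a := fun k : ℕ => c + (k : ℝ)) (n := N) (fun k _ => hIi W hWi _ _ (hcn k) (hcs k))
  simp only [Nat.cast_zero, add_zero] at s1 s2
  rw [← hWint]
  change |_ - ∫ x in c..(c + N), g x| ≤ _
  rw [← s1, ← Finset.sum_sub_distrib]
  refine (Finset.abs_sum_le_sum_abs _ _).trans ((Finset.sum_le_sum fun n _ => hstep n).trans ?_)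
  rw [s2, intervalIntegral.integral_of_le (by simp)]
  refine setIntegral_mono_set hWi ?_ ?_
  · exact (ae_restrict_iff' measurableSet_Ioi).2 (Filter.Eventually.of_forall hW0)
  · exact Filter.Eventually.of_forall fun t ht => hc0.trans ht.1

lemma cuspS_estimate (q p a y : ℝ) (hq : 0 < q) (hp : 1 < p) (ha : 0 < a) (hpa : 2 < p + a)
    (hy : 0 < y) :
    |cuspS q p y - (1 / y) ^ p * Real.Gamma p|
      ≤ q ^ (p - 1) + (q + 1/2) ^ p +
       (|(p - 1) * (p - 2)| * (q + 1/2) ^ (-a) * ((1 / y) ^ (p + a - 2) * Real.Gamma (p + a - 2))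
        + 2 * (p - 1) * y * ((1 / y) ^ (p - 1) * Real.Gamma (p - 1))
        + y ^ 2 * ((1 / y) ^ p * Real.Gamma p)) := by
  have hp0 : 0 < p := by linarith
  have hc0 : 0 < q + 1/2 := by positivity
  have hg := integrableOn_rpow_exp p y hp0 hy
  have hs := cusp_summable q p y hq hp0 hy
  have h0 : cuspS q p y = q ^ (p - 1) * Real.exp (-(y * q)) +
      ∑' n : ℕ, ((n : ℝ) + 1 + q) ^ (p - 1) * Real.exp (-(y * ((n : ℝ) + 1 + q))) := by
    rw [cuspS, hs.tsum_eq_zero_add]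
    simp [mul_comm]
  have hs' : Summable fun n : ℕ =>
      ((n : ℝ) + 1 + q) ^ (p - 1) * Real.exp (-(y * ((n : ℝ) + 1 + q))) := by
    have := (summable_nat_add_iff 1).2 hs
    simpa [mul_comm] using this
  have hgc : IntegrableOn (fun x : ℝ => x ^ (p - 1) * Real.exp (-(y * x))) (Set.Ioi (q + 1/2)) :=
    hg.mono_set (Set.Ioi_subset_Ioi hc0.le)
  have hlim := (hs'.hasSum.tendsto_sum_nat.sub
    (intervalIntegral_tendsto_integral_Ioi (q + 1/2) hgc
      (b := fun N : ℕ => q + 1/2 + (N : ℝ)) (l := Filter.atTop)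
      (Filter.tendsto_atTop_add_const_left _ _ tendsto_natCast_atTop_atTop))).abs
  have hB := le_of_tendsto' hlim (fun N => cusp_sum_bound q p a y hq hp ha hpa hy N)
  have hI : (1 / y) ^ p * Real.Gamma p = (∫ x in Set.Ioc 0 (q + 1/2), x ^ (p - 1) * Real.exp (-(y * x)))
      + ∫ x in Set.Ioi (q + 1/2), x ^ (p - 1) * Real.exp (-(y * x)) := by
    rw [← Real.integral_rpow_mul_exp_neg_mul_Ioi hp0 hy, ← setIntegral_union
      (Set.Ioc_disjoint_Ioi le_rfl) measurableSet_Ioi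
      (hg.mono_set Set.Ioc_subset_Ioi_self) hgc, Set.Ioc_union_Ioi_eq_Ioi hc0.le]
  have hJ : |∫ x in Set.Ioc 0 (q + 1/2), x ^ (p - 1) * Real.exp (-(y * x))| ≤ (q + 1/2) ^ p := by
    have := norm_setIntegral_le_of_norm_le_const (μ := volume) (s := Set.Ioc 0 (q + 1/2))
      (f := fun x : ℝ => x ^ (p - 1) * Real.exp (-(y * x))) (C := (q + 1/2) ^ (p - 1))
      (by simp) (fun x hx => by
        have hx0 : 0 < x := hx.1
        rw [Real.norm_eq_abs, abs_of_nonneg (by positivity)]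
        have h1 : x ^ (p - 1) ≤ (q + 1/2) ^ (p - 1) :=
          Real.rpow_le_rpow hx0.le hx.2 (by linarith)
        have h2 : Real.exp (-(y * x)) ≤ 1 := Real.exp_le_one_iff.2 (by nlinarith [mul_pos hy hx0])
        calc _ ≤ (q + 1/2) ^ (p - 1) * 1 := by gcongr
          _ = _ := mul_one _)
    rw [Real.norm_eq_abs] at this
    refine this.trans (le_of_eq ?_)
    rw [Real.rpow_sub_one hc0.ne', Measure.real, Real.volume_Ioc, sub_zero,
      ENNReal.toReal_ofReal hc0.le]
    field_simp
  have hQ : |q ^ (p - 1) * Real.exp (-(y * q))| ≤ q ^ (p - 1) := by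
    rw [abs_of_nonneg (by positivity)]
    have h2 : Real.exp (-(y * q)) ≤ 1 := Real.exp_le_one_iff.2 (by nlinarith [mul_pos hy hq])
    calc _ ≤ q ^ (p - 1) * 1 := by gcongr
      _ = _ := mul_one _
  rw [hI] at hB
  rw [h0, hI]
  rw [abs_le] at hB hJ hQ ⊢
  constructor <;> linarith [hB.1, hB.2, hJ.1, hJ.2, hQ.1, hQ.2]

lemma cuspF_small (q p : ℝ) (hq : 0 < q) (hp : 1 < p) :
    ∃ C : ℝ, ∀ y : ℝ, 0 < y → y ≤ 1 →
      |y ^ p * cuspS q p y / Real.Gamma p - 1| ≤ C * y ^ (2 - 1 / p) := by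
  have hp0 : 0 < p := by linarith
  have ha : 0 < 1 / p := by positivity
  have hap : p * (1 / p) = 1 := by field_simp
  set a := 1 / p with ha_def
  have ha1 : a < 1 := by nlinarith
  have hpa : 2 < p + a := by nlinarith [mul_pos ha (sub_pos.2 hp), mul_pos (mul_pos ha (sub_pos.2 hp)) (sub_pos.2 hp)]
  have hG : 0 < Real.Gamma p := Real.Gamma_pos_of_pos hp0
  have hG1 : 0 < Real.Gamma (p - 1) := Real.Gamma_pos_of_pos (by linarith)
  have hG2 : 0 < Real.Gamma (p + a - 2) := Real.Gamma_pos_of_pos (by linarith)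
  have hp1 : 0 < p - 1 := by linarith
  refine ⟨(q ^ (p - 1) + (q + 1/2) ^ p + |(p - 1) * (p - 2)| * (q + 1/2) ^ (-a) * Real.Gamma (p + a - 2)
    + 2 * (p - 1) * Real.Gamma (p - 1) + Real.Gamma p) / Real.Gamma p, fun y hy hy1 => ?_⟩
  have est := cuspS_estimate q p a y hq hp ha hpa hy
  have hyp : 0 < y ^ p := by positivity
  have inv : ∀ r : ℝ, (1 / y) ^ r = y ^ (-r) := fun r => by
    rw [one_div, Real.inv_rpow hy.le, Real.rpow_neg hy.le]
  have e0 : y ^ p * (1 / y) ^ p = 1 := by rw [inv, ← Real.rpow_add hy]; simp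
  have e1 : y ^ p * (1 / y) ^ (p + a - 2) = y ^ (2 - a) := by
    rw [inv, ← Real.rpow_add hy]; congr 1; ring
  have e2 : y ^ p * (y * (1 / y) ^ (p - 1)) = y ^ 2 := by
    rw [inv, Real.rpow_neg hy.le, Real.rpow_sub_one hy.ne']; field_simp
  have l1 : y ^ 2 ≤ y ^ (2 - a) := by
    rw [← Real.rpow_natCast]
    exact Real.rpow_le_rpow_of_exponent_ge hy hy1 (by push_cast; linarith)
  have l2 : y ^ p ≤ y ^ (2 - a) :=
    Real.rpow_le_rpow_of_exponent_ge hy hy1 (by linarith)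
  have e3 : y ^ p * cuspS q p y / Real.Gamma p - 1
      = y ^ p * (cuspS q p y - (1 / y) ^ p * Real.Gamma p) / Real.Gamma p := by
    rw [mul_sub, ← mul_assoc, e0]; field_simp
  rw [e3, abs_div, abs_mul, abs_of_pos hyp, abs_of_pos hG, div_mul_eq_mul_div]
  refine div_le_div_of_nonneg_right ?_ hG.le
  refine (mul_le_mul_of_nonneg_left est hyp.le).trans ?_
  calc _ = (q ^ (p - 1) + (q + 1/2) ^ p) * y ^ p
      + |(p - 1) * (p - 2)| * (q + 1/2) ^ (-a) * Real.Gamma (p + a - 2) * (y ^ p * (1 / y) ^ (p + a - 2))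
      + 2 * (p - 1) * Real.Gamma (p - 1) * (y ^ p * (y * (1 / y) ^ (p - 1)))
      + Real.Gamma p * y ^ 2 * (y ^ p * (1 / y) ^ p) := by ring
    _ ≤ (q ^ (p - 1) + (q + 1/2) ^ p) * y ^ (2 - a)
      + |(p - 1) * (p - 2)| * (q + 1/2) ^ (-a) * Real.Gamma (p + a - 2) * y ^ (2 - a)
      + 2 * (p - 1) * Real.Gamma (p - 1) * y ^ (2 - a)
      + Real.Gamma p * y ^ (2 - a) := by
        rw [e0, e1, e2, mul_one]
        gcongr
    _ = _ := by ring

lemma cuspF_large (q p : ℝ) (hq : 0 < q) (hp : 1 < p) :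
    ∃ M : ℝ, ∀ y : ℝ, 1 ≤ y → |y ^ p * cuspS q p y / Real.Gamma p - 1| ≤ M := by
  obtain ⟨M, hM⟩ := cuspS_bound_large q p hq (by linarith)
  have hG : 0 < Real.Gamma p := Real.Gamma_pos_of_pos (by linarith)
  refine ⟨M / Real.Gamma p + 1, fun y hy => (abs_sub _ _).trans ?_⟩
  rw [abs_div, abs_of_pos hG, abs_one]
  gcongr
  exact hM y hy

lemma cuspF_hasDerivAt (q p y : ℝ) (hq : 0 < q) (hp : 0 < p) (hy : 0 < y) :
    HasDerivAt (fun y => y ^ p * cuspS q p y / Real.Gamma p - 1)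
      ((p * y ^ (p - 1) * cuspS q p y + y ^ p * -cuspS q (p + 1) y) / Real.Gamma p) y :=
  (((Real.hasDerivAt_rpow_const (p := p) (Or.inl hy.ne')).mul
    (cuspS_hasDerivAt q p y hq hp hy)).div_const _).sub_const 1

lemma cusp_integrable (q p : ℝ) (hq : 0 < q) (hp : 1 < p) :
    IntegrableOn (fun y : ℝ => y ^ (-(2 : ℝ)) * (y ^ p * cuspS q p y / Real.Gamma p - 1))
      (Set.Ioi 0) := by
  have hp0 : 0 < p := by linarith
  obtain ⟨C, hC⟩ := cuspF_small q p hq hp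
  obtain ⟨M, hM⟩ := cuspF_large q p hq hp
  have hcont : ContinuousOn (fun y : ℝ => y ^ (-(2 : ℝ)) * (y ^ p * cuspS q p y / Real.Gamma p - 1))
      (Set.Ioi 0) := fun y hy =>
    ((Real.continuousAt_rpow_const y _ (Or.inl (ne_of_gt hy))).mul
      (cuspF_hasDerivAt q p y hq hp0 hy).continuousAt).continuousWithinAt
  rw [← Set.Ioc_union_Ioi_eq_Ioi (zero_le_one (α := ℝ))]
  refine IntegrableOn.union ?_ ?_
  · have ha1 : 1 / p < 1 := by rw [div_lt_one hp0]; exact hp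
    have hi : IntegrableOn (fun y : ℝ => C * y ^ (-(1 / p))) (Set.Ioc 0 1) := by
      have := intervalIntegral.intervalIntegrable_rpow' (a := 0) (b := 1) (r := -(1 / p))
        (by linarith)
      rw [intervalIntegrable_iff_integrableOn_Ioc_of_le zero_le_one] at this
      exact this.const_mul C
    refine Integrable.mono' hi ((hcont.mono Set.Ioc_subset_Ioi_self).aestronglyMeasurable
      measurableSet_Ioc) ((ae_restrict_iff' measurableSet_Ioc).2
        (Filter.Eventually.of_forall fun y hy => ?_))
    have hy0 : 0 < y := hy.1
    rw [norm_mul, Real.norm_eq_abs, Real.norm_eq_abs, abs_of_nonneg (by positivity)]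
    calc _ ≤ y ^ (-(2 : ℝ)) * (C * y ^ (2 - 1 / p)) := by gcongr; exact hC y hy0 hy.2
      _ = C * (y ^ (-(2 : ℝ)) * y ^ (2 - 1 / p)) := by ring
      _ = _ := by rw [← Real.rpow_add hy0]; congr 2; ring
  · have hi : IntegrableOn (fun y : ℝ => M * y ^ (-(2 : ℝ))) (Set.Ioi 1) :=
      (integrableOn_Ioi_rpow_of_lt (by norm_num) one_pos).const_mul M
    refine Integrable.mono' hi ((hcont.mono (Set.Ioi_subset_Ioi zero_le_one)).aestronglyMeasurable
      measurableSet_Ioi) ((ae_restrict_iff' measurableSet_Ioi).2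
        (Filter.Eventually.of_forall fun y hy => ?_))
    have hy0 : (1 : ℝ) < y := hy
    have hy1 : 0 < y := by linarith
    rw [norm_mul, Real.norm_eq_abs, Real.norm_eq_abs, abs_of_nonneg (by positivity), mul_comm M]
    gcongr
    exact hM y hy0.le

/-- Recursion for the charge moment of the cusp: `M₀(p) = M₀(p+1)` where
`M₀(p) = (p-1) ∫₀^∞ y^{-2} (yᵖ S_p(y)/Γ(p) - 1) dy`. -/
theorem charge_moment_recursion (q p : ℝ) (hq : 0 < q) (hp : 1 < p) :
    IntegrableOn (fun y : ℝ => y ^ (-(2 : ℝ)) * (y ^ p * cuspS q p y / Real.Gamma p - 1))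
      (Set.Ioi 0) ∧
    IntegrableOn (fun y : ℝ =>
        y ^ (-(2 : ℝ)) * (y ^ (p + 1) * cuspS q (p + 1) y / Real.Gamma (p + 1) - 1))
      (Set.Ioi 0) ∧
    (p - 1) * ∫ y in Set.Ioi (0 : ℝ), y ^ (-(2 : ℝ)) * (y ^ p * cuspS q p y / Real.Gamma p - 1)
      = p * ∫ y in Set.Ioi (0 : ℝ),
          y ^ (-(2 : ℝ)) * (y ^ (p + 1) * cuspS q (p + 1) y / Real.Gamma (p + 1) - 1) := by
  have hp0 : 0 < p := by linarith
  have h1 := cusp_integrable q p hq hp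
  have h2 := cusp_integrable q (p + 1) hq (by linarith)
  refine ⟨h1, h2, ?_⟩
  obtain ⟨C, hC⟩ := cuspF_small q p hq hp
  obtain ⟨M, hM⟩ := cuspF_large q p hq hp
  have hG : 0 < Real.Gamma p := Real.Gamma_pos_of_pos hp0
  have key := integral_Ioi_of_hasDerivAt_of_tendsto (a := 0) (m := 0)
    (f := fun y => y⁻¹ * (y ^ p * cuspS q p y / Real.Gamma p - 1))
    (f' := fun y => (p - 1) * (y ^ (-(2 : ℝ)) * (y ^ p * cuspS q p y / Real.Gamma p - 1))
      - p * (y ^ (-(2 : ℝ)) * (y ^ (p + 1) * cuspS q (p + 1) y / Real.Gamma (p + 1) - 1)))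
    ?_ ?_ ((h1.const_mul _).sub (h2.const_mul _)) ?_
  · rw [integral_sub (h1.const_mul _) (h2.const_mul _), integral_const_mul,
      integral_const_mul] at key
    simp only [inv_zero, zero_mul, sub_zero] at key
    linarith
  · have hb : 0 < 1 - 1 / p := by
      have : 1 / p < 1 := by rw [div_lt_one hp0]; exact hp
      linarith
    rw [ContinuousWithinAt, inv_zero, zero_mul]
    have hlim : Filter.Tendsto (fun y : ℝ => C * y ^ (1 - 1 / p)) (nhdsWithin 0 (Set.Ici 0))
        (nhds 0) := by
      have := ((Real.continuousAt_rpow_const 0 (1 - 1 / p) (Or.inr hb.le)).tendsto.const_mul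
        C).mono_left (nhdsWithin_le_nhds (s := Set.Ici 0))
      rwa [Real.zero_rpow hb.ne', mul_zero] at this
    refine squeeze_zero_norm' ?_ hlim
    have hmem : Set.Icc (0 : ℝ) 1 ∈ nhdsWithin (0 : ℝ) (Set.Ici 0) :=
      Icc_mem_nhdsGE one_pos
    filter_upwards [hmem] with y hy
    rcases eq_or_lt_of_le hy.1 with h | h
    · rw [← h, Real.zero_rpow hb.ne']; simp
    · rw [norm_mul, Real.norm_eq_abs, Real.norm_eq_abs, abs_of_nonneg (by positivity)]
      calc _ ≤ y⁻¹ * (C * y ^ (2 - 1 / p)) := by gcongr; exact hC y h hy.2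
        _ = C * (y ^ (-(1 : ℝ)) * y ^ (2 - 1 / p)) := by rw [Real.rpow_neg_one]; ring
        _ = _ := by rw [← Real.rpow_add h]; congr 2; ring
  · intro y hy
    have hy0 : 0 < y := hy
    refine ((hasDerivAt_inv hy0.ne').mul (cuspF_hasDerivAt q p y hq hp0 hy0)).congr_deriv ?_
    rw [Real.Gamma_add_one hp0.ne', Real.rpow_sub_one hy0.ne', Real.rpow_add_one hy0.ne',
      Real.rpow_neg hy0.le, Real.rpow_two]
    field_simp
    ring
  · have hlim : Filter.Tendsto (fun y : ℝ => y⁻¹ * M) Filter.atTop (nhds 0) := by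
      simpa using tendsto_inv_atTop_zero.mul_const M
    refine squeeze_zero_norm' ?_ hlim
    filter_upwards [Filter.eventually_ge_atTop (1 : ℝ)] with y hy
    have hy1 : 0 < y := by linarith
    rw [norm_mul, Real.norm_eq_abs, Real.norm_eq_abs, abs_of_nonneg (by positivity)]
    gcongr
    exact hM y hy
end
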